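/- Let R be a commutative ring, H ◁ R an ideal of finite index, d ≥ 3, and assume E_d(R) = SL_d(R). Then SK₁(R, H; d) = SL_d(R,H)/E_d(R,H) is central in GL_d(R)/E_d(R,H). -/

import Mathlib

open Matrix

/-- `E_d(R)`: the subgroup of `SL_d(R)` generated by the elementary matrices
`I_d + rE_{i,j}` (`i ≠ j`, `r ∈ R`). -/
def Esub (R : Type*) [CommRing R] (d : ℕ) : Subgroup (SpecialLinearGroup (Fin d) R) :=
  Subgroup.closure {M | ∃ (i j : Fin d) (c : R), i ≠ j ∧
    (M : Matrix (Fin d) (Fin d) R) = Matrix.transvection i j c}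

/-- `E_d(R,H)`: the normal subgroup of `E_d(R)` generated (as a normal subgroup of
`E_d(R)`) by the elementary matrices `I_d + hE_{i,j}` with `h ∈ H`. -/
def EHsub (R : Type*) [CommRing R] (d : ℕ) (H : Ideal R) :
    Subgroup (SpecialLinearGroup (Fin d) R) :=
  Subgroup.closure {M | ∃ g ∈ Esub R d, ∃ s : SpecialLinearGroup (Fin d) R,
    (∃ (i j : Fin d) (c : R), i ≠ j ∧ c ∈ H ∧
      (s : Matrix (Fin d) (Fin d) R) = Matrix.transvection i j c) ∧ M = g * s * g⁻¹}

/-- `SL_d(R,H) = ker(SL_d(R) → SL_d(R/H))`. -/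
def SLrel (R : Type*) [CommRing R] (d : ℕ) (H : Ideal R) :
    Subgroup (SpecialLinearGroup (Fin d) R) :=
  MonoidHom.ker (SpecialLinearGroup.map (n := Fin d) (Ideal.Quotient.mk H))

/-!
Let `N` be the group of matrices in `SL_d(R)` whose images in `GL_d(R) / E_d(R, H)` are central. It
is normal and contains `E_d(R, H)`. It also contains every block in `SL_d(R, H)`, that is, every
matrix fixing a basis vector and its coordinate: such a matrix `c` commutes with a diagonal matrix
supported at the fixed index `l`, and its commutators with the elementary matrices in row or column
`l`, which generate `E_d(R)`, are transvections of level `H` along a coordinate.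

It remains to reduce an arbitrary `g` in `SL_d(R, H)` to a block modulo `N`, i.e. to move `g e_l`
back to `e_l` by `N`. Stable range one of `R / H` is used to show that the class of vectors that are
`N`-equivalent to a row operation at `l` applied to a vector with a pivot at `l` is stable under all
elementary matrices. Hence `g e_l` belongs to it, and the underlying pivot vector may be taken
congruent to `e_l` modulo `H`. Two congruent vectors having coprime entries in the same two
positions are `N`-equivalent, since `2 × 2` congruence matrices embed as blocks when `d ≥ 3`.
-/

section StableRange

/-- A commutative ring has stable range one (Bass) if every unimodular pair `(a, b)` can be
shortened to a unit `a + c * b`. -/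
def HasStableRangeOne (A : Type*) [CommRing A] : Prop :=
  ∀ ⦃a b : A⦄, IsCoprime a b → ∃ c, IsUnit (a + c * b)

theorem HasStableRangeOne.of_finite_maximalSpectrum (A : Type*) [CommRing A]
    [Finite (MaximalSpectrum A)] : HasStableRangeOne A := by
  classical
  intro a b hab
  have maximal_coprime : Pairwise fun m m' : MaximalSpectrum A ↦
      IsCoprime m.asIdeal m'.asIdeal := fun m m' hne ↦
    Ideal.isCoprime_iff_sup_eq.mpr <|
      m.isMaximal.coprime_of_ne m'.isMaximal fun h ↦ hne (MaximalSpectrum.ext h)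
  obtain ⟨c, hc⟩ := Ideal.exists_forall_sub_mem_ideal maximal_coprime
    fun m ↦ if a ∈ m.asIdeal then 1 else 0
  refine ⟨c, of_not_not fun not_unit ↦ ?_⟩
  obtain ⟨m, hm, hmem⟩ := exists_max_ideal_of_mem_nonunits not_unit
  have hcm := hc ⟨m, hm⟩
  by_cases ha : a ∈ m
  · have hb : b ∈ m := by
      rw [if_pos ha] at hcm
      have b_eq : a + c * b - a - (c - 1) * b = b := by ring
      exact b_eq ▸ m.sub_mem (m.sub_mem hmem ha) (m.mul_mem_right b hcm)
    obtain ⟨u, v, huv⟩ := hab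
    exact hm.ne_top <| (Ideal.eq_top_iff_one m).mpr <|
      huv ▸ m.add_mem (m.mul_mem_left u ha) (m.mul_mem_left v hb)
  · rw [if_neg ha, sub_zero] at hcm
    exact ha (by simpa using m.sub_mem hmem (m.mul_mem_right b hcm))

end StableRange

section VecTransvection

open scoped commutatorElement

variable {R n : Type*} [CommRing R] [Fintype n] [DecidableEq n]

theorem sl_smul_eq_mulVec (g : SpecialLinearGroup n R) (y : n → R) :
    g • y = (g : Matrix n n R) *ᵥ y :=
  rfl

theorem sl_smul_single_one_apply (g : SpecialLinearGroup n R) (i j : n) :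
    (g • (Pi.single j 1 : n → R)) i = g i j := by
  rw [sl_smul_eq_mulVec, mulVec_single_one, col_apply]

theorem dotProduct_sl_smul (g : SpecialLinearGroup n R) (s y : n → R) :
    s ⬝ᵥ (g • y) = (s ᵥ* (g : Matrix n n R)) ⬝ᵥ y :=
  dotProduct_mulVec s _ y

theorem vecMul_inv_vecMul (g : SpecialLinearGroup n R) (s : n → R) :
    (s ᵥ* (↑g⁻¹ : Matrix n n R)) ᵥ* (g : Matrix n n R) = s := by
  rw [vecMul_vecMul, ← Matrix.SpecialLinearGroup.coe_mul, inv_mul_cancel,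
    Matrix.SpecialLinearGroup.coe_one, vecMul_one]

/-- The transvection `y ↦ y + (t ⬝ᵥ y) • z`, which has determinant one since `t ⬝ᵥ z = 0`. -/
def vecTransvection (z t : n → R) (h : t ⬝ᵥ z = 0) : SpecialLinearGroup n R :=
  ⟨1 + vecMulVec z t, by
    rw [vecMulVec_eq Unit, det_one_add_replicateCol_mul_replicateRow, h, add_zero]⟩

variable {z z' t t' : n → R}

theorem coe_vecTransvection (h : t ⬝ᵥ z = 0) :
    (vecTransvection z t h : Matrix n n R) = 1 + vecMulVec z t :=
  rfl

theorem vecTransvection_smul (h : t ⬝ᵥ z = 0) (y : n → R) :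
    vecTransvection z t h • y = y + (t ⬝ᵥ y) • z := by
  rw [sl_smul_eq_mulVec, coe_vecTransvection, add_mulVec, one_mulVec, vecMulVec_mulVec,
    op_smul_eq_smul]

theorem vecMul_vecTransvection (h : t ⬝ᵥ z = 0) (s : n → R) :
    s ᵥ* (vecTransvection z t h : Matrix n n R) = s + (s ⬝ᵥ z) • t := by
  rw [coe_vecTransvection, vecMul_add, vecMul_one, vecMul_vecMulVec]

theorem vecTransvection_zero_left (h : t ⬝ᵥ (0 : n → R) = 0) : vecTransvection 0 t h = 1 := by
  apply Subtype.ext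
  simp [coe_vecTransvection]

theorem vecTransvection_zero_right (h : (0 : n → R) ⬝ᵥ z = 0) : vecTransvection z 0 h = 1 := by
  apply Subtype.ext
  simp [coe_vecTransvection]

theorem vecTransvection_add_left (h : t ⬝ᵥ z = 0) (h' : t ⬝ᵥ z' = 0)
    (hadd : t ⬝ᵥ (z + z') = 0) :
    vecTransvection (z + z') t hadd = vecTransvection z t h * vecTransvection z' t h' := by
  apply Subtype.ext
  simp only [coe_vecTransvection, add_vecMulVec, Matrix.SpecialLinearGroup.coe_mul, mul_add,
    mul_one, add_mul, one_mul, vecMulVec_mul_vecMulVec, h', zero_smul, vecMulVec_zero, add_zero]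
  abel

theorem vecTransvection_add_right (h : t ⬝ᵥ z = 0) (h' : t' ⬝ᵥ z = 0)
    (hadd : (t + t') ⬝ᵥ z = 0) :
    vecTransvection z (t + t') hadd = vecTransvection z t h * vecTransvection z t' h' := by
  apply Subtype.ext
  simp only [coe_vecTransvection, vecMulVec_add, Matrix.SpecialLinearGroup.coe_mul, mul_add,
    mul_one, add_mul, one_mul, vecMulVec_mul_vecMulVec, h, zero_smul, vecMulVec_zero, add_zero]
  abel

theorem vecTransvection_inv (h : t ⬝ᵥ z = 0) (hneg : (-t) ⬝ᵥ z = 0) :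
    (vecTransvection z t h)⁻¹ = vecTransvection z (-t) hneg := by
  rw [inv_eq_iff_mul_eq_one, ← vecTransvection_add_right _ _ (by simp)]
  apply Subtype.ext
  simp [coe_vecTransvection]

theorem vecTransvection_smul_left (r : R) (h : t ⬝ᵥ (r • z) = 0) (h' : (r • t) ⬝ᵥ z = 0) :
    vecTransvection (r • z) t h = vecTransvection z (r • t) h' := by
  apply Subtype.ext
  rw [coe_vecTransvection, coe_vecTransvection, smul_vecMulVec, vecMulVec_smul]

theorem conj_vecTransvection {g : SpecialLinearGroup n R} (hz : g • z = z')
    (ht : t ᵥ* (↑g⁻¹ : Matrix n n R) = t') (h : t ⬝ᵥ z = 0) (h' : t' ⬝ᵥ z' = 0) :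
    g * vecTransvection z t h * g⁻¹ = vecTransvection z' t' h' := by
  have one_eq : (1 : Matrix n n R) = (g : Matrix n n R) * (↑g⁻¹ : Matrix n n R) := by
    rw [← Matrix.SpecialLinearGroup.coe_mul, mul_inv_cancel, Matrix.SpecialLinearGroup.coe_one]
  subst hz ht
  apply Subtype.ext
  rw [coe_vecTransvection, Matrix.SpecialLinearGroup.coe_mul, Matrix.SpecialLinearGroup.coe_mul,
    coe_vecTransvection, mul_add, add_mul, mul_vecMulVec, vecMulVec_mul, mul_one, one_eq,
    sl_smul_eq_mulVec]

theorem vecTransvection_mul_vecTransvection {a : R} (h : t ⬝ᵥ z = 0) (h' : t' ⬝ᵥ z' = 0)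
    (ha : t' ⬝ᵥ z = a) (hz' : t ⬝ᵥ z' = 0) (hat : (a • t) ⬝ᵥ z' = 0) :
    vecTransvection z' t' h' * vecTransvection z t h =
      vecTransvection z t h * (vecTransvection z' (a • t) hat * vecTransvection z' t' h') := by
  apply Subtype.ext
  simp only [coe_vecTransvection, Matrix.SpecialLinearGroup.coe_mul, mul_add, mul_one, add_mul,
    one_mul, vecMulVec_mul_vecMulVec, vecMulVec_smul, Matrix.smul_mul, Matrix.mul_smul, ha, hz',
    zero_smul, vecMulVec_zero, smul_zero, add_zero]
  abel

theorem transvection_eq_vecTransvection {i j : n} (hij : i ≠ j) (a b : R)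
    (h : Pi.single j b ⬝ᵥ Pi.single i a = 0) :
    Matrix.SpecialLinearGroup.transvection hij (a * b) =
      vecTransvection (Pi.single i a) (Pi.single j b) h := by
  apply Subtype.ext
  ext p q
  simp only [coe_vecTransvection, Matrix.SpecialLinearGroup.transvection_coe, Matrix.add_apply,
    vecMulVec_apply, single_apply, Pi.single_apply]
  grind

theorem transvection_eq_commutator {i j l : n}
    (hij : i ≠ j) (hil : i ≠ l) (hlj : l ≠ j) (r : R) :
    Matrix.SpecialLinearGroup.transvection hij r =
      ⁅Matrix.SpecialLinearGroup.transvection hil r,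
        Matrix.SpecialLinearGroup.transvection hlj 1⁆ := by
  rw [commutatorElement_def, Matrix.SpecialLinearGroup.transvection_inv,
    Matrix.SpecialLinearGroup.transvection_inv]
  apply Subtype.ext
  simp only [Matrix.SpecialLinearGroup.coe_mul, Matrix.SpecialLinearGroup.transvection_coe]
  simp only [mul_add, mul_one, add_mul, one_mul, single_mul_single_same, ← single_neg, mul_neg,
    single_mul_single_of_ne _ _ _ _ hil.symm, single_mul_single_of_ne _ _ _ _ hij.symm,
    single_mul_single_of_ne _ _ _ _ hlj.symm, add_zero, neg_mul, add_neg_cancel_right]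
  abel

theorem vecTransvection_single_right_mem {G : Subgroup (SpecialLinearGroup n R)} {l : n}
    (h : Pi.single l 1 ⬝ᵥ z = 0)
    (hG : ∀ k (hk : k ≠ l), Matrix.SpecialLinearGroup.transvection hk (z k) ∈ G) :
    vecTransvection z (Pi.single l 1) h ∈ G := by
  have hzl : z l = 0 := by simpa using h
  suffices ∃ h, vecTransvection (∑ k, Pi.single k (z k)) (Pi.single l 1) h ∈ G by
    simpa only [Finset.univ_sum_single] using this.2
  refine Finset.sum_induction _ (fun v ↦ ∃ h, vecTransvection v (Pi.single l 1) h ∈ G) ?_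
    ⟨dotProduct_zero _, by simpa only [vecTransvection_zero_left] using G.one_mem⟩ ?_
  · rintro v w ⟨hv, hvG⟩ ⟨hw, hwG⟩
    refine ⟨by rw [dotProduct_add, hv, hw, add_zero], ?_⟩
    rw [vecTransvection_add_left hv hw]
    exact G.mul_mem hvG hwG
  · intro k _
    obtain rfl | hk := eq_or_ne k l
    · simpa only [hzl, Pi.single_zero, dotProduct_zero, vecTransvection_zero_left, exists_const]
        using G.one_mem
    · refine ⟨by simp [hk.symm], ?_⟩
      simpa only [← transvection_eq_vecTransvection hk, mul_one] using hG k hk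

theorem vecTransvection_single_left_mem {G : Subgroup (SpecialLinearGroup n R)} {l : n}
    (h : t ⬝ᵥ Pi.single l 1 = 0)
    (hG : ∀ k (hk : l ≠ k), Matrix.SpecialLinearGroup.transvection hk (t k) ∈ G) :
    vecTransvection (Pi.single l 1) t h ∈ G := by
  have htl : t l = 0 := by simpa using h
  suffices ∃ h, vecTransvection (Pi.single l 1) (∑ k, Pi.single k (t k)) h ∈ G by
    simpa only [Finset.univ_sum_single] using this.2
  refine Finset.sum_induction _ (fun v ↦ ∃ h, vecTransvection (Pi.single l 1) v h ∈ G) ?_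
    ⟨zero_dotProduct _, by simpa only [vecTransvection_zero_right] using G.one_mem⟩ ?_
  · rintro v w ⟨hv, hvG⟩ ⟨hw, hwG⟩
    refine ⟨by rw [add_dotProduct, hv, hw, add_zero], ?_⟩
    rw [vecTransvection_add_right hv hw]
    exact G.mul_mem hvG hwG
  · intro k _
    obtain rfl | hk := eq_or_ne l k
    · simpa only [htl, Pi.single_zero, zero_dotProduct, vecTransvection_zero_right, exists_const]
        using G.one_mem
    · refine ⟨by simp [hk], ?_⟩
      simpa only [← transvection_eq_vecTransvection hk, one_mul] using hG k hk

end VecTransvection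

section ElementarySubgroups

variable {R n : Type*} [CommRing R] [Fintype n] [DecidableEq n]

/-- The elementary matrices `I + cE_{i,j}` of level `H`. -/
def elementaryMatrices (n : Type*) [Fintype n] [DecidableEq n] (H : Ideal R) :
    Set (SpecialLinearGroup n R) :=
  {M | ∃ (i j : n) (hij : i ≠ j), ∃ c ∈ H, Matrix.SpecialLinearGroup.transvection hij c = M}

variable {d : ℕ} {H : Ideal R}

theorem transvection_mem_elementaryMatrices {i j : n} (hij : i ≠ j) {c : R} (hc : c ∈ H) :
    Matrix.SpecialLinearGroup.transvection hij c ∈ elementaryMatrices n H :=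
  ⟨i, j, hij, c, hc, rfl⟩

theorem mem_elementaryMatrices_iff {M : SpecialLinearGroup n R} :
    M ∈ elementaryMatrices n H ↔ ∃ (i j : n) (c : R), i ≠ j ∧ c ∈ H ∧
      (M : Matrix n n R) = Matrix.transvection i j c := by
  constructor
  · rintro ⟨i, j, hij, c, hc, rfl⟩
    exact ⟨i, j, c, hij, hc, rfl⟩
  · rintro ⟨i, j, c, hij, hc, hM⟩
    exact ⟨i, j, hij, c, hc, Subtype.ext hM.symm⟩

theorem Esub_eq_closure : Esub R d = Subgroup.closure (elementaryMatrices (Fin d) ⊤) := by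
  rw [Esub]
  congr 1
  ext M
  simp [mem_elementaryMatrices_iff]

theorem EHsub_eq_normalClosure (hE : Esub R d = ⊤) :
    EHsub R d H = Subgroup.normalClosure (elementaryMatrices (Fin d) H) := by
  rw [EHsub, hE, Subgroup.normalClosure]
  congr 1
  ext M
  simp only [Set.mem_ofPred_eq, Subgroup.mem_top, true_and, ← mem_elementaryMatrices_iff,
    Group.mem_conjugatesOfSet_iff, isConj_iff]
  grind

theorem transvection_mem_EHsub {i j : Fin d} (hij : i ≠ j) {c : R} (hc : c ∈ H) :
    Matrix.SpecialLinearGroup.transvection hij c ∈ EHsub R d H :=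
  Subgroup.subset_closure ⟨1, one_mem _, _, mem_elementaryMatrices_iff.mp
    (transvection_mem_elementaryMatrices hij hc), by group⟩

theorem mem_SLrel_iff {g : SpecialLinearGroup (Fin d) R} :
    g ∈ SLrel R d H ↔ ∀ (y : Fin d → R) (k : Fin d), (g • y) k - y k ∈ H := by
  have entrywise : g ∈ SLrel R d H ↔
      ∀ i j, (g i j : R) - (1 : Matrix (Fin d) (Fin d) R) i j ∈ H := by
    simp only [SLrel, MonoidHom.mem_ker, Matrix.SpecialLinearGroup.ext_iff, ← Ideal.Quotient.eq]
    simp [one_apply, apply_ite (Ideal.Quotient.mk H)]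
  rw [entrywise]
  constructor
  · intro hg y k
    have : (g • y) k - y k = ∑ j, ((g k j : R) - (1 : Matrix (Fin d) (Fin d) R) k j) * y j := by
      simp [sl_smul_eq_mulVec, mulVec, dotProduct, sub_mul, one_apply]
    exact this ▸ H.sum_mem fun j _ ↦ H.mul_mem_right _ (hg k j)
  · intro hg i j
    simpa only [sl_smul_single_one_apply, Pi.single_apply, one_apply] using hg (Pi.single j 1) i

instance : (SLrel R d H).Normal := MonoidHom.normal_ker _

theorem EHsub_normal (hE : Esub R d = ⊤) : (EHsub R d H).Normal :=
  EHsub_eq_normalClosure hE ▸ Subgroup.normalClosure_normal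

theorem EHsub_le_SLrel (hE : Esub R d = ⊤) : EHsub R d H ≤ SLrel R d H := by
  rw [EHsub_eq_normalClosure hE]
  refine Subgroup.normalClosure_le_normal ?_
  rintro _ ⟨i, j, hij, c, hc, rfl⟩
  refine mem_SLrel_iff.mpr fun y k ↦ ?_
  rw [← mul_one c, transvection_eq_vecTransvection hij c 1 (by simp [hij.symm]),
    vecTransvection_smul]
  obtain rfl | hk := eq_or_ne k i
  · simpa using H.mul_mem_left _ hc
  · simp [hk]

variable {l : Fin d} {z t : Fin d → R}

theorem vecTransvection_single_right_mem_EHsub (h : Pi.single l 1 ⬝ᵥ z = 0) (hz : ∀ k, z k ∈ H) :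
    vecTransvection z (Pi.single l 1) h ∈ EHsub R d H :=
  vecTransvection_single_right_mem h fun k hk ↦ transvection_mem_EHsub hk (hz k)

theorem vecTransvection_single_left_mem_EHsub (h : t ⬝ᵥ Pi.single l 1 = 0) (ht : ∀ k, t k ∈ H) :
    vecTransvection (Pi.single l 1) t h ∈ EHsub R d H :=
  vecTransvection_single_left_mem h fun k hk ↦ transvection_mem_EHsub hk (ht k)

end ElementarySubgroups

section Blocks

variable {R n : Type*} [CommRing R] [Fintype n] [DecidableEq n]

/-- A matrix is a block at `l` if it is the direct sum of a matrix on the other coordinates and the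
entry `1` at `l`. -/
def IsBlock (l : n) (g : SpecialLinearGroup n R) : Prop :=
  g • (Pi.single l 1 : n → R) = Pi.single l 1 ∧
    Pi.single l 1 ᵥ* (g : Matrix n n R) = Pi.single l 1

variable {m : Type*} [Fintype m] [DecidableEq m]

/-- The matrix of `A` acting on the coordinates in the range of `f` and fixing the others. It is
written `1 + U(A - 1)Uᵀ`, where the columns of `U` are the basis vectors indexed by `f`. -/
def blockEmbedding (f : m ↪ n) (A : SpecialLinearGroup m R) : SpecialLinearGroup n R :=
  ⟨1 + (1 : Matrix n n R).submatrix id f * ((A - 1 : Matrix m m R) *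
      (1 : Matrix n n R).submatrix f id), by
    rw [det_one_add_mul_comm, Matrix.mul_assoc, ← submatrix_mul _ _ _ _ _ Function.bijective_id,
      one_mul, submatrix_one_embedding, mul_one, add_sub_cancel, A.det_coe]⟩

variable {f : m ↪ n} (A : SpecialLinearGroup m R)

theorem blockEmbedding_smul (y : n → R) :
    blockEmbedding f A • y =
      y + (1 : Matrix n n R).submatrix id f *ᵥ (A • (y ∘ f) - y ∘ f) := by
  have restrict : (1 : Matrix n n R).submatrix f id *ᵥ y = y ∘ f := by
    ext a
    simp [mulVec, dotProduct, one_apply]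
  rw [sl_smul_eq_mulVec, sl_smul_eq_mulVec, blockEmbedding, Matrix.SpecialLinearGroup.coe_mk,
    add_mulVec, one_mulVec, ← mulVec_mulVec, ← mulVec_mulVec, restrict, sub_mulVec, one_mulVec]

theorem blockEmbedding_smul_apply (y : n → R) (a : m) :
    (blockEmbedding f A • y) (f a) = (A • (y ∘ f)) a := by
  rw [blockEmbedding_smul]
  simp [mulVec, dotProduct, one_apply]

theorem blockEmbedding_smul_of_notMem_range (y : n → R) {k : n} (hk : k ∉ Set.range f) :
    (blockEmbedding f A • y) k = y k := by
  rw [blockEmbedding_smul]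
  simp only [Set.mem_range, not_exists] at hk
  simp [mulVec, dotProduct, one_apply, fun a ↦ Ne.symm (hk a)]

theorem isBlock_blockEmbedding {l : n} (hl : l ∉ Set.range f) :
    IsBlock l (blockEmbedding f A) := by
  have hl' : ∀ a, l ≠ f a := fun a h ↦ hl ⟨a, h.symm⟩
  constructor
  · have : (Pi.single l 1 : n → R) ∘ f = 0 := by
      ext a
      simp [(hl' a).symm]
    rw [blockEmbedding_smul, this, smul_zero, sub_zero, mulVec_zero, add_zero]
  · have : Pi.single l 1 ᵥ* (1 : Matrix n n R).submatrix id f = 0 := by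
      ext a
      simp [one_apply, hl' a]
    rw [blockEmbedding, Matrix.SpecialLinearGroup.coe_mk, vecMul_add, vecMul_one, ← vecMul_vecMul,
      this, zero_vecMul, add_zero]

variable {d e : ℕ} {H : Ideal R}

theorem blockEmbedding_mem_SLrel (f : Fin e ↪ Fin d) {A : SpecialLinearGroup (Fin e) R}
    (hA : A ∈ SLrel R e H) : blockEmbedding f A ∈ SLrel R d H := by
  refine mem_SLrel_iff.mpr fun y k ↦ ?_
  by_cases hk : k ∈ Set.range f
  · obtain ⟨a, rfl⟩ := hk
    rw [blockEmbedding_smul_apply]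
    exact mem_SLrel_iff.mp hA (y ∘ f) a
  · simp [blockEmbedding_smul_of_notMem_range A y hk]

-- Bézout coefficients `(p, q)` of `v` are corrected by the error `h ∈ H` they make on `v'`, so that
-- the two matrices with first columns `v` and `v'` become congruent.
theorem exists_mem_SLrel_smul_eq {v v' : Fin 2 → R} (hv : IsCoprime (v 0) (v 1))
    (hv' : IsCoprime (v' 0) (v' 1)) (hvv' : ∀ a, v' a - v a ∈ H) :
    ∃ A ∈ SLrel R 2 H, A • v = v' := by
  obtain ⟨p, q, hpq⟩ := hv
  obtain ⟨p', q', hpq'⟩ := hv'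
  obtain ⟨h, h_def⟩ : ∃ h, h = p * v' 0 + q * v' 1 - 1 := ⟨_, rfl⟩
  have h_mem : h ∈ H := by
    have : h = p * (v' 0 - v 0) + q * (v' 1 - v 1) := by rw [h_def, ← hpq]; ring
    exact this ▸ H.add_mem (H.mul_mem_left p (hvv' 0)) (H.mul_mem_left q (hvv' 1))
  let F : SpecialLinearGroup (Fin 2) R := ⟨!![v 0, -q; v 1, p], by
    rw [det_fin_two_of]; linear_combination hpq⟩
  let F' : SpecialLinearGroup (Fin 2) R := ⟨!![v' 0, -(q - h * q'); v' 1, p - h * p'], by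
    rw [det_fin_two_of]; linear_combination -h_def - h * hpq'⟩
  have first_col : F • (Pi.single 0 1 : Fin 2 → R) = v := by
    ext a; rw [sl_smul_single_one_apply]; fin_cases a <;> rfl
  have first_col' : F' • (Pi.single 0 1 : Fin 2 → R) = v' := by
    ext a; rw [sl_smul_single_one_apply]; fin_cases a <;> rfl
  refine ⟨F' * F⁻¹, ?_, ?_⟩
  · have h_zero := Ideal.Quotient.eq_zero_iff_mem.mpr h_mem
    have hv_eq a := Ideal.Quotient.eq.mpr (hvv' a)
    rw [SLrel, MonoidHom.mem_ker, map_mul, map_inv, mul_inv_eq_one]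
    ext a b
    change Ideal.Quotient.mk H (F' a b) = Ideal.Quotient.mk H (F a b)
    fin_cases a <;> fin_cases b <;> simp [F, F', hv_eq, h_zero]
  · rw [← first_col, mul_smul, inv_smul_smul, first_col']

end Blocks

section Orbits

theorem orbit_smul_congr {G X : Type*} [Group G] [MulAction G X] {N : Subgroup G} [N.Normal]
    {x y : X} (g : G) (h : MulAction.orbit N x = MulAction.orbit N y) :
    MulAction.orbit N (g • x) = MulAction.orbit N (g • y) := by
  rw [← MulAction.smul_orbit_eq_orbit_smul, h, MulAction.smul_orbit_eq_orbit_smul]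

variable {R : Type*} [CommRing R] {d : ℕ} {H : Ideal R}
  {N : Subgroup (SpecialLinearGroup (Fin d) R)} {i k l : Fin d}
  {x y y' : Fin d → R}

-- Bézout coefficients of `(y i, y l)` give a functional with value `1` at `y` and `0` at `v`.
theorem orbit_add_eq (hN : EHsub R d H ≤ N) (hy : IsCoprime (y i) (y l)) {v : Fin d → R}
    (hv : ∀ k, v k ∈ H) (hvi : v i = 0) (hvl : v l = 0) :
    MulAction.orbit N (y + v) = MulAction.orbit N y := by
  obtain ⟨p, q, hpq⟩ := hy
  have mem_of_apply_eq_zero {j : Fin d} (r : R) (hvj : v j = 0) :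
      ∃ h, vecTransvection v (r • Pi.single j 1) h ∈ N := by
    refine ⟨by simp [hvj], ?_⟩
    rw [← vecTransvection_smul_left r (by simp [hvj])]
    exact hN <| vecTransvection_single_right_mem_EHsub _ fun k ↦ H.mul_mem_left r (hv k)
  obtain ⟨hi, hiN⟩ := mem_of_apply_eq_zero p hvi
  obtain ⟨hl, hlN⟩ := mem_of_apply_eq_zero q hvl
  have hmem := N.mul_mem hiN hlN
  rw [← vecTransvection_add_right hi hl (by rw [add_dotProduct, hi, hl, add_zero])] at hmem
  have hsmul : y + v = (⟨_, hmem⟩ : N) • y := by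
    rw [Subgroup.mk_smul, vecTransvection_smul]
    simp [hpq]
  rw [hsmul, MulAction.orbit_smul]

theorem orbit_eq_of_eq_off_pair (hd : 3 ≤ d)
    (hN : ∀ j, ∀ g ∈ SLrel R d H, IsBlock j g → g ∈ N) (hil : i ≠ l)
    (hy : IsCoprime (y i) (y l)) (hy' : IsCoprime (y' i) (y' l)) (hyy' : ∀ k, y' k - y k ∈ H)
    (hoff : ∀ k, k ≠ i → k ≠ l → y' k = y k) :
    MulAction.orbit N y' = MulAction.orbit N y := by
  let f : Fin 2 ↪ Fin d := ⟨![i, l], by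
    simpa [Function.Injective, Fin.forall_fin_two] using ⟨hil, hil.symm⟩⟩
  have range_f : Set.range f = {i, l} := range_cons_cons_empty i l ![]
  obtain ⟨A, hA, hAy⟩ := exists_mem_SLrel_smul_eq (v := y ∘ f) (v' := y' ∘ f) hy hy'
    fun a ↦ hyy' (f a)
  obtain ⟨j, hji, hjl⟩ := Fin.exists_ne_and_ne_of_two_lt i l hd
  have hmem := hN j _ (blockEmbedding_mem_SLrel f hA)
    (isBlock_blockEmbedding A (by simp [range_f, hji, hjl]))
  have hsmul : y' = (⟨_, hmem⟩ : N) • y := by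
    ext k
    rw [Subgroup.mk_smul]
    by_cases hk : k ∈ Set.range f
    · obtain ⟨a, rfl⟩ := hk
      rw [blockEmbedding_smul_apply, hAy, Function.comp_apply]
    · rw [blockEmbedding_smul_of_notMem_range A y hk]
      simp only [range_f, Set.mem_insert_iff, Set.mem_singleton_iff, not_or] at hk
      exact hoff k hk.1 hk.2
  rw [hsmul, MulAction.orbit_smul]

theorem orbit_eq_of_isCoprime (hd : 3 ≤ d) (hEN : EHsub R d H ≤ N)
    (hN : ∀ j, ∀ g ∈ SLrel R d H, IsBlock j g → g ∈ N) (hil : i ≠ l)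
    (hy : IsCoprime (y i) (y l)) (hy' : IsCoprime (y' i) (y' l)) (hyy' : ∀ k, y' k - y k ∈ H) :
    MulAction.orbit N y' = MulAction.orbit N y := by
  let v : Fin d → R := fun k ↦ if k = i ∨ k = l then 0 else y' k - y k
  have hv k : v k ∈ H := by
    by_cases hk : k = i ∨ k = l
    · simp [v, hk]
    · simpa [v, hk] using hyy' k
  have hvi : v i = 0 := by simp [v]
  have hvl : v l = 0 := by simp [v]
  rw [← orbit_add_eq hEN hy hv hvi hvl]
  refine orbit_eq_of_eq_off_pair hd hN hil ?_ hy' (fun k ↦ ?_) fun k hki hkl ↦ ?_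
  · simpa [hvi, hvl] using hy
  · simpa [sub_sub] using H.sub_mem (hyy' k) (hv k)
  · simp [v, hki, hkl]

/-- A vector with a pivot at `l`: an entry which is a unit modulo `H` and is coprime to the `i`-th
entry. -/
def HasPivot (H : Ideal R) (i l : Fin d) (y : Fin d → R) : Prop :=
  IsCoprime (y i) (y l) ∧ IsUnit (Ideal.Quotient.mk H (y l))

theorem HasPivot.exists_orbit_eq (hEN : EHsub R d H ≤ N) (hy : HasPivot H i l y) (hkl : k ≠ l) :
    ∃ y', HasPivot H k l y' ∧ MulAction.orbit N y' = MulAction.orbit N y := by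
  obtain rfl | hki := eq_or_ne k i
  · exact ⟨y, hy, rfl⟩
  obtain ⟨b, hb⟩ := Ideal.Quotient.mk_surjective (↑hy.2.unit⁻¹ : R ⧸ H)
  have one_sub_mem : 1 - y l * b ∈ H := by
    rw [← Ideal.Quotient.eq, map_one, map_mul, hb, IsUnit.mul_val_inv]
  have h_mem : (1 - y l * b) * (1 - y k) ∈ H := H.mul_mem_right _ one_sub_mem
  refine ⟨y + Pi.single k ((1 - y l * b) * (1 - y k)), ⟨?_, ?_⟩,
    orbit_add_eq hEN hy.1 (fun j ↦ ?_) (by simp [hki.symm]) (by simp [hkl.symm])⟩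
  · refine ⟨1, b * (1 - y k), ?_⟩
    simp only [Pi.add_apply, Pi.single_eq_same, Pi.single_eq_of_ne hkl.symm]
    ring
  · simpa [hkl.symm] using hy.2
  · obtain rfl | hj := eq_or_ne j k
    · simpa using h_mem
    · simp [hj]

/-- The `N`-orbit of `x` contains the image of a vector with a pivot at `l` under a row operation
that adds multiples of the other entries to the `l`-th one. -/
def ReducesToPivot (N : Subgroup (SpecialLinearGroup (Fin d) R)) (H : Ideal R) (l : Fin d)
    (x : Fin d → R) : Prop :=
  ∃ i, i ≠ l ∧ ∃ y, HasPivot H i l y ∧ ∃ (t : Fin d → R) (ht : t ⬝ᵥ Pi.single l 1 = 0),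
    MulAction.orbit N x = MulAction.orbit N (vecTransvection (Pi.single l 1) t ht • y)

theorem HasPivot.reducesToPivot (hy : HasPivot H i l y) (hil : i ≠ l) : ReducesToPivot N H l y :=
  ⟨i, hil, y, hy, 0, zero_dotProduct _, by rw [vecTransvection_zero_right, one_smul]⟩

namespace ReducesToPivot

theorem congr (hx : ReducesToPivot N H l x) (hxy : MulAction.orbit N y = MulAction.orbit N x) :
    ReducesToPivot N H l y := by
  simpa only [ReducesToPivot, hxy] using hx

variable [N.Normal] {t : Fin d → R}

theorem vecTransvection_smul_pivot (hx : ReducesToPivot N H l x) (ht : t ⬝ᵥ Pi.single l 1 = 0) :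
    ReducesToPivot N H l (vecTransvection (Pi.single l 1) t ht • x) := by
  obtain ⟨i, hil, y, hy, s, hs, hxy⟩ := hx
  refine ⟨i, hil, y, hy, t + s, by rw [add_dotProduct, ht, hs, add_zero], ?_⟩
  rw [vecTransvection_add_right ht hs, mul_smul]
  exact orbit_smul_congr _ hxy

theorem vecTransvection_smul_of_ne (hd : 3 ≤ d) (hEN : EHsub R d H ≤ N)
    (hx : ReducesToPivot N H l x) (hkl : k ≠ l) (ht : t ⬝ᵥ Pi.single k 1 = 0) (htl : t l = 0) :
    ReducesToPivot N H l (vecTransvection (Pi.single k 1) t ht • x) := by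
  obtain ⟨_, -, _, hy, s, hs, hxy⟩ := hx
  obtain ⟨i, hik, hil⟩ := Fin.exists_ne_and_ne_of_two_lt k l hd
  obtain ⟨y, hy, hyy⟩ := hy.exists_orbit_eq hEN hil
  set ρ := vecTransvection (Pi.single k 1) t ht with ρ_def
  have hρ {j : Fin d} (hj : j ≠ k) : (ρ • y) j = y j := by simp [ρ_def, vecTransvection_smul, hj]
  have fixes_pivot : ρ • (Pi.single l 1 : Fin d → R) = Pi.single l 1 := by
    simp [ρ_def, vecTransvection_smul, htl]
  have hs' : (s ᵥ* (↑ρ⁻¹ : Matrix (Fin d) (Fin d) R)) ⬝ᵥ Pi.single l 1 = 0 := by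
    rw [← fixes_pivot, dotProduct_sl_smul, vecMul_inv_vecMul, hs]
  refine ⟨i, hil, ρ • y, ?_, _, hs', ?_⟩
  · rwa [HasPivot, hρ hik, hρ hkl.symm]
  · rw [orbit_smul_congr ρ (hxy.trans (orbit_smul_congr _ hyy.symm)),
      ← conj_vecTransvection fixes_pivot rfl hs hs', mul_smul, mul_smul, inv_smul_smul]

theorem of_isCoprime (hsr : HasStableRangeOne (R ⧸ H)) (hil : i ≠ l) (hy : IsCoprime (y i) (y l)) :
    ReducesToPivot N H l y := by
  obtain ⟨c, hc⟩ := hsr (hy.symm.map (Ideal.Quotient.mk H))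
  obtain ⟨p, rfl⟩ := Ideal.Quotient.mk_surjective c
  have hpos : Pi.single i p ⬝ᵥ Pi.single l 1 = 0 := by simp [hil.symm]
  have hneg : (-Pi.single i p) ⬝ᵥ Pi.single l 1 = 0 := by rw [neg_dotProduct, hpos, neg_zero]
  rw [← inv_smul_smul (vecTransvection _ _ hpos) y, vecTransvection_inv hpos hneg]
  refine vecTransvection_smul_pivot (HasPivot.reducesToPivot ?_ hil) hneg
  constructor
  · simpa [vecTransvection_smul, hil] using hy.add_mul_right_right p
  · simpa [vecTransvection_smul] using hc

-- The row operation at `l` is split into its `k`-th part `L` and the rest. The rest commutes with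
-- `X` up to a row operation at `k`, while `X * L` mixes only the entries at `k` and `l`, so it
-- preserves their coprimality.
theorem transvection_smul_of_ne (hd : 3 ≤ d) (hEN : EHsub R d H ≤ N)
    (hsr : HasStableRangeOne (R ⧸ H)) (hx : ReducesToPivot N H l x) (hkl : k ≠ l) (c : R) :
    ReducesToPivot N H l (Matrix.SpecialLinearGroup.transvection hkl c • x) := by
  obtain ⟨_, -, _, hy, s, hs, hxy⟩ := hx
  obtain ⟨y, hy, hyy⟩ := hy.exists_orbit_eq hEN hkl
  obtain ⟨t, a, htk, rfl⟩ : ∃ t a, t k = 0 ∧ s = t + Pi.single k a :=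
    ⟨s - Pi.single k (s k), s k, by simp, by simp⟩
  have htl : t l = 0 := by simpa [hkl.symm] using hs
  have ht : t ⬝ᵥ Pi.single l 1 = 0 := by simp [htl]
  have hct : (c • t) ⬝ᵥ Pi.single k 1 = 0 := by simp [htk]
  have hal : Pi.single k a ⬝ᵥ Pi.single l 1 = 0 := by simp [hkl.symm]
  have hlc : Pi.single l c ⬝ᵥ Pi.single k 1 = 0 := by simp [hkl]
  rw [← one_mul c, transvection_eq_vecTransvection hkl 1 c hlc]
  rw [vecTransvection_add_right ht hal, mul_smul] at hxy
  set X := vecTransvection (Pi.single k 1) (Pi.single l c) hlc with X_def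
  set L := vecTransvection (Pi.single l 1) (Pi.single k a) hal with L_def
  refine congr ?_ <| orbit_smul_congr X <| hxy.trans <| orbit_smul_congr _ <|
    orbit_smul_congr L hyy.symm
  rw [← mul_smul X, X_def, vecTransvection_mul_vecTransvection (a := c) ht hlc (by simp)
    (by simp [htk]) hct, mul_smul, mul_smul, ← X_def]
  refine vecTransvection_smul_pivot
    (vecTransvection_smul_of_ne hd hEN (of_isCoprime hsr hkl ?_) hkl hct (by simp [htl])) ht
  have hL : (L • y) l = y l + a * y k ∧ (L • y) k = y k := by
    simp [L_def, vecTransvection_smul, hkl]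
  have hX (w : Fin d → R) : (X • w) k = w k + c * w l ∧ (X • w) l = w l := by
    simp [X_def, vecTransvection_smul, hkl.symm]
  rw [(hX _).1, (hX _).2, hL.1, hL.2]
  exact (hy.1.add_mul_right_right a).add_mul_right_left c

theorem smul (hd : 3 ≤ d) (hE : Esub R d = ⊤) (hEN : EHsub R d H ≤ N)
    (hsr : HasStableRangeOne (R ⧸ H)) (hx : ReducesToPivot N H l x)
    (g : SpecialLinearGroup (Fin d) R) : ReducesToPivot N H l (g • x) := by
  have transvection_smul {i j : Fin d} (hij : i ≠ j) (c : R) {x : Fin d → R}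
      (hx : ReducesToPivot N H l x) :
      ReducesToPivot N H l (Matrix.SpecialLinearGroup.transvection hij c • x) := by
    obtain rfl | hjl := eq_or_ne j l
    · exact hx.transvection_smul_of_ne hd hEN hsr hij c
    rw [← one_mul c, transvection_eq_vecTransvection hij 1 c (by simp [hij])]
    obtain rfl | hil := eq_or_ne i l
    · exact hx.vecTransvection_smul_pivot _
    · exact hx.vecTransvection_smul_of_ne hd hEN hil _ (by simp [hjl.symm])
  have hg : g ∈ Subgroup.closure (elementaryMatrices (Fin d) ⊤) :=
    Esub_eq_closure (R := R) ▸ (hE ▸ Subgroup.mem_top g : g ∈ Esub R d)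
  induction hg using Subgroup.closure_induction_left with
  | one => rwa [one_smul]
  | mul_left _ hM _ _ ih =>
    obtain ⟨i, j, hij, c, -, rfl⟩ := hM
    rw [mul_smul]
    exact transvection_smul hij c ih
  | inv_mul_cancel _ hM _ _ ih =>
    obtain ⟨i, j, hij, c, -, rfl⟩ := hM
    rw [mul_smul, Matrix.SpecialLinearGroup.transvection_inv]
    exact transvection_smul hij (-c) ih

end ReducesToPivot

end Orbits

section BlockReduction

variable {R : Type*} [CommRing R] {d : ℕ} {H : Ideal R}
  {N : Subgroup (SpecialLinearGroup (Fin d) R)}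
  {g : SpecialLinearGroup (Fin d) R} {l : Fin d}

theorem exists_mem_EHsub_isBlock_mul (hg : g ∈ SLrel R d H)
    (hgl : g • (Pi.single l 1 : Fin d → R) = Pi.single l 1) :
    ∃ ε ∈ EHsub R d H, IsBlock l (g * ε) := by
  set s : Fin d → R := Pi.single l 1 ᵥ* (g : Matrix (Fin d) (Fin d) R) with s_def
  have hs : s ⬝ᵥ Pi.single l 1 = 1 := by
    rw [s_def, ← dotProduct_sl_smul, hgl]
    simp
  have ht : (Pi.single l 1 - s) ⬝ᵥ Pi.single l 1 = 0 := by
    rw [sub_dotProduct, hs]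
    simp
  refine ⟨_, vecTransvection_single_left_mem_EHsub ht fun k ↦ ?_, ?_, ?_⟩
  · rw [← neg_mem_iff, Pi.sub_apply, neg_sub, s_def, single_one_vecMul, row_apply,
      ← sl_smul_single_one_apply, Pi.single_comm]
    exact mem_SLrel_iff.mp hg _ l
  · rw [mul_smul, vecTransvection_smul, ht, zero_smul, add_zero, hgl]
  · rw [Matrix.SpecialLinearGroup.coe_mul, ← vecMul_vecMul, vecMul_vecTransvection, ← s_def, hs,
      one_smul, add_sub_cancel]

theorem orbit_smul_single_eq [N.Normal] (hd : 3 ≤ d) (hE : Esub R d = ⊤)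
    (hsr : HasStableRangeOne (R ⧸ H)) (hEN : EHsub R d H ≤ N) (hNS : N ≤ SLrel R d H)
    (hN : ∀ j, ∀ g ∈ SLrel R d H, IsBlock j g → g ∈ N) (hg : g ∈ SLrel R d H) (l : Fin d) :
    MulAction.orbit N (g • (Pi.single l 1 : Fin d → R)) =
      MulAction.orbit N (Pi.single l 1 : Fin d → R) := by
  obtain ⟨j, hjl, -⟩ := Fin.exists_ne_and_ne_of_two_lt l l hd
  have hpivot : HasPivot H j l (Pi.single l 1 : Fin d → R) := by
    simp [HasPivot, isCoprime_one_right]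
  obtain ⟨i, hil, y, hy, t, ht, hgy⟩ :=
    (hpivot.reducesToPivot (N := N) hjl).smul hd hE hEN hsr g
  set r := vecTransvection (Pi.single l 1) t ht with r_def
  have hr : r • (Pi.single l 1 : Fin d → R) = Pi.single l 1 := by
    rw [r_def, vecTransvection_smul, ht, zero_smul, add_zero]
  obtain ⟨n, hn⟩ := MulAction.mem_orbit_iff.mp (hgy ▸ MulAction.mem_orbit_self (r • y))
  have y_eq : y = (r⁻¹ * (n * g) * r⁻¹⁻¹) • (Pi.single l 1 : Fin d → R) := by
    rw [inv_inv, mul_smul, hr, mul_smul, mul_smul, ← Subgroup.smul_def, hn, inv_smul_smul]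
  have y_congr : ∀ k, y k - (Pi.single l 1 : Fin d → R) k ∈ H := by
    rw [y_eq]
    exact mem_SLrel_iff.mp
      (Subgroup.Normal.conj_mem inferInstance _ (mul_mem (hNS n.2) hg) _) _
  rw [hgy, orbit_smul_congr r (orbit_eq_of_isCoprime hd hEN hN hil _ hy.1 y_congr), hr]
  simp [isCoprime_one_right]

theorem SLrel_le_of_forall_isBlock_mem [N.Normal] (hd : 3 ≤ d) (hE : Esub R d = ⊤)
    (hsr : HasStableRangeOne (R ⧸ H)) (hEN : EHsub R d H ≤ N)
    (hN : ∀ j, ∀ g ∈ SLrel R d H, IsBlock j g → g ∈ N) : SLrel R d H ≤ N := by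
  intro g hg
  let l : Fin d := ⟨0, by lia⟩
  have horbit := orbit_smul_single_eq hd hE hsr (le_inf hEN (EHsub_le_SLrel hE))
    inf_le_right (fun j g hg hb ↦ ⟨hN j g hg hb, hg⟩) hg l
  obtain ⟨n, hn⟩ := MulAction.mem_orbit_iff.mp
    (horbit ▸ MulAction.mem_orbit_self (Pi.single l 1 : Fin d → R))
  obtain ⟨hnN, hnS⟩ := Subgroup.mem_inf.mp n.2
  rw [Subgroup.smul_def, ← mul_smul] at hn
  obtain ⟨ε, hε, hblock⟩ := exists_mem_EHsub_isBlock_mul (mul_mem hnS hg) hn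
  have hmem := hN l _ (mul_mem (mul_mem hnS hg) (EHsub_le_SLrel hE hε)) hblock
  exact (N.mul_mem_cancel_left hnN).mp ((N.mul_mem_cancel_right (hEN hε)).mp hmem)

end BlockReduction

section CommuteWithBlocks

open scoped commutatorElement

variable {R : Type*} [CommRing R] {d : ℕ} {H : Ideal R} {c : SpecialLinearGroup (Fin d) R}
  {i l : Fin d}

theorem IsBlock.commutator_transvection_col_mem (hb : IsBlock l c) (hc : c ∈ SLrel R d H)
    (hil : i ≠ l) (r : R) : ⁅c, Matrix.SpecialLinearGroup.transvection hil r⁆ ∈ EHsub R d H := by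
  have row_eq : Pi.single l 1 ᵥ* (↑c⁻¹ : Matrix (Fin d) (Fin d) R) = Pi.single l 1 := by
    simpa only [inv_inv, hb.2] using vecMul_inv_vecMul c⁻¹ (Pi.single l 1)
  set z : Fin d → R := Pi.single i r with z_def
  have hz : Pi.single l 1 ⬝ᵥ z = 0 := by simp [z_def, hil.symm]
  have hcz : Pi.single l 1 ⬝ᵥ (c • z) = 0 := by rw [dotProduct_sl_smul, hb.2, hz]
  have hsub : Pi.single l 1 ⬝ᵥ (c • z - z) = 0 := by rw [dotProduct_sub, hcz, hz, sub_zero]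
  have mem := vecTransvection_single_right_mem_EHsub hsub (mem_SLrel_iff.mp hc z)
  have factor := vecTransvection_add_left hsub hz (by rwa [sub_add_cancel])
  simp only [sub_add_cancel] at factor
  rwa [← mul_one r, transvection_eq_vecTransvection hil r 1 hz, commutatorElement_def,
    conj_vecTransvection rfl row_eq hz hcz, factor, mul_inv_cancel_right]

theorem IsBlock.commutator_transvection_row_mem (hb : IsBlock l c) (hc : c ∈ SLrel R d H)
    (hli : l ≠ i) (r : R) : ⁅c, Matrix.SpecialLinearGroup.transvection hli r⁆ ∈ EHsub R d H := by
  set t : Fin d → R := Pi.single i r with t_def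
  set t' := t ᵥ* (↑c⁻¹ : Matrix (Fin d) (Fin d) R) with t'_def
  have ht : t ⬝ᵥ Pi.single l 1 = 0 := by simp [t_def, hli]
  have ht' : t' ⬝ᵥ Pi.single l 1 = 0 := by
    rw [t'_def, ← dotProduct_sl_smul, inv_smul_eq_iff.mpr hb.1.symm, ht]
  have hsub : (t' - t) ⬝ᵥ Pi.single l 1 = 0 := by rw [sub_dotProduct, ht', ht, sub_zero]
  have mem := vecTransvection_single_left_mem_EHsub (H := H) hsub fun k ↦ by
    have hk : t' k - t k = r * ((c⁻¹ • (Pi.single k 1 : Fin d → R)) i -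
        (Pi.single k 1 : Fin d → R) i) := by
      rw [t'_def, ← dotProduct_single_one (t ᵥ* _) k, ← dotProduct_sl_smul, t_def,
        single_dotProduct, ← dotProduct_single_one (Pi.single i r) k, single_dotProduct, mul_sub]
    rw [Pi.sub_apply, hk]
    exact H.mul_mem_left r (mem_SLrel_iff.mp (inv_mem hc) _ i)
  have factor := vecTransvection_add_right hsub ht (by rwa [sub_add_cancel])
  simp only [sub_add_cancel] at factor
  rwa [← one_mul r, transvection_eq_vecTransvection hli 1 r ht, commutatorElement_def,
    conj_vecTransvection hb.1 rfl ht ht', factor, mul_inv_cancel_right]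

theorem IsBlock.commute_map {G : Type*} [Group G] {φ : SpecialLinearGroup (Fin d) R →* G}
    (hφ : EHsub R d H ≤ φ.ker) (hE : Esub R d = ⊤) (hb : IsBlock l c) (hc : c ∈ SLrel R d H)
    (s : SpecialLinearGroup (Fin d) R) : Commute (φ c) (φ s) := by
  let C := (Subgroup.centralizer {φ c}).comap φ
  have mem_C {s : SpecialLinearGroup (Fin d) R} : s ∈ C ↔ Commute (φ c) (φ s) :=
    Subgroup.mem_centralizer_singleton_iff.trans eq_comm
  have mem_of_commutator {s : SpecialLinearGroup (Fin d) R} (hs : ⁅c, s⁆ ∈ EHsub R d H) :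
      s ∈ C := by
    rw [mem_C, ← commutatorElement_eq_one_iff_commute, ← map_commutatorElement]
    exact hφ hs
  have col_mem {i} (hil : i ≠ l) (r : R) :=
    mem_of_commutator (hb.commutator_transvection_col_mem hc hil r)
  have row_mem {i} (hli : l ≠ i) (r : R) :=
    mem_of_commutator (hb.commutator_transvection_row_mem hc hli r)
  suffices Subgroup.closure (elementaryMatrices (Fin d) ⊤) ≤ C by
    rw [← Esub_eq_closure, hE] at this
    exact mem_C.mp (this (Subgroup.mem_top s))
  refine (Subgroup.closure_le _).mpr ?_
  rintro _ ⟨i, j, hij, r, -, rfl⟩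
  obtain rfl | hil := eq_or_ne i l
  · exact row_mem hij r
  obtain rfl | hjl := eq_or_ne j l
  · exact col_mem hij r
  rw [transvection_eq_commutator hij hil hjl.symm, commutatorElement_def]
  have h₁ := col_mem hil r
  have h₂ := row_mem hjl.symm 1
  exact mul_mem (mul_mem (mul_mem h₁ h₂) (inv_mem h₁)) (inv_mem h₂)

end CommuteWithBlocks

section GeneralLinear

variable {R n : Type*} [CommRing R] [Fintype n] [DecidableEq n]

/-- The invertible diagonal matrix with given diagonal units. -/
def diagonalGL (v : n → Rˣ) : GL n R :=
  Units.map (diagonalRingHom n R) (MulEquiv.piUnits.symm v)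

theorem coe_diagonalGL (v : n → Rˣ) :
    (diagonalGL v : Matrix n n R) = diagonal fun i ↦ (v i : R) :=
  rfl

theorem det_diagonalGL (v : n → Rˣ) : GeneralLinearGroup.det (diagonalGL v) = ∏ i, v i := by
  ext
  simp [coe_diagonalGL]

theorem diagonalGL_conj_transvection (v : n → Rˣ) {i j : n} (hij : i ≠ j) (c : R) :
    diagonalGL v * (Matrix.SpecialLinearGroup.transvection hij c : GL n R) *
      (diagonalGL v)⁻¹ =
        Matrix.SpecialLinearGroup.transvection hij (v i * c * ↑(v j)⁻¹) := by
  rw [mul_inv_eq_iff_eq_mul]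
  ext p q : 2
  simp only [Units.val_mul, coe_diagonalGL, Matrix.SpecialLinearGroup.coe_GL_coe_matrix,
    Matrix.SpecialLinearGroup.transvection_coe, diagonal_mul, mul_diagonal, Matrix.add_apply,
    one_apply, single_apply]
  by_cases hpq : i = p ∧ j = q
  · obtain ⟨rfl, rfl⟩ := hpq
    simp [hij]
  · obtain rfl | hne := eq_or_ne p q <;> simp [*]

theorem IsBlock.commute_diagonalGL_mulSingle {l : n} {c : SpecialLinearGroup n R}
    (hc : IsBlock l c) (u : Rˣ) : Commute (c : GL n R) (diagonalGL (Pi.mulSingle l u)) := by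
  have col_eq_zero {i : n} (hi : i ≠ l) : c i l = 0 := by
    rw [← sl_smul_single_one_apply, hc.1, Pi.single_eq_of_ne hi]
  have row_eq_zero {j : n} (hj : j ≠ l) : c l j = 0 := by
    rw [← row_apply (c : Matrix n n R), ← single_one_vecMul, hc.2, Pi.single_eq_of_ne hj]
  ext i j
  simp only [Units.val_mul, Matrix.SpecialLinearGroup.coe_GL_coe_matrix, coe_diagonalGL,
    mul_diagonal, diagonal_mul]
  obtain rfl | hij := eq_or_ne i j
  · exact mul_comm _ _
  obtain rfl | hi := eq_or_ne i l
  · simp [row_eq_zero hij.symm]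
  obtain rfl | hj := eq_or_ne j l
  · simp [col_eq_zero hij]
  · simp [hi, hj]

theorem exists_toGL_eq_conj (g : GL n R) (s : SpecialLinearGroup n R) :
    ∃ s' : SpecialLinearGroup n R, (s' : GL n R) = g * s * g⁻¹ := by
  rw [← Set.mem_range, Matrix.SpecialLinearGroup.range_toGL]
  simp

theorem exists_eq_toGL_mul_diagonalGL (g : GL n R) (l : n) :
    ∃ (s : SpecialLinearGroup n R) (u : Rˣ), g = s * diagonalGL (Pi.mulSingle l u) := by
  let D := diagonalGL (Pi.mulSingle l (GeneralLinearGroup.det g))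
  obtain ⟨s, hs⟩ : g * D⁻¹ ∈ Set.range (Matrix.SpecialLinearGroup.toGL (n := n) (R := R)) := by
    rw [Matrix.SpecialLinearGroup.range_toGL]
    simp [D, det_diagonalGL]
  exact ⟨s, _, by rw [hs, inv_mul_cancel_right]⟩

variable {d : ℕ} {H : Ideal R}

theorem diagonalGL_conj_mem_map_EHsub (hE : Esub R d = ⊤) (v : Fin d → Rˣ)
    {s : SpecialLinearGroup (Fin d) R} (hs : s ∈ EHsub R d H) :
    diagonalGL v * s * (diagonalGL v)⁻¹ ∈
      (EHsub R d H).map Matrix.SpecialLinearGroup.toGL := by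
  let D := diagonalGL v
  have hnormal := EHsub_normal (H := H) hE
  let P := ((EHsub R d H).map Matrix.SpecialLinearGroup.toGL).comap
    ((MulAut.conj D : GL (Fin d) R →* GL (Fin d) R).comp Matrix.SpecialLinearGroup.toGL)
  have hP : P.Normal := by
    refine ⟨fun s hs g ↦ ?_⟩
    obtain ⟨s', hs', hs⟩ := hs
    obtain ⟨g', hg⟩ := exists_toGL_eq_conj D g
    refine ⟨g' * s' * g'⁻¹, hnormal.conj_mem _ hs' _, ?_⟩
    rw [map_mul, map_mul, map_inv, hs, hg]
    simp [mul_assoc]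
  suffices EHsub R d H ≤ P from this hs
  rw [EHsub_eq_normalClosure hE]
  refine Subgroup.normalClosure_le_normal ?_
  rintro _ ⟨i, j, hij, c, hc, rfl⟩
  exact ⟨_, transvection_mem_EHsub hij (H.mul_mem_right _ (H.mul_mem_left _ hc)),
    (diagonalGL_conj_transvection v hij c).symm⟩

theorem map_toGL_EHsub_normal (hE : Esub R d = ⊤) [NeZero d] :
    ((EHsub R d H).map (Matrix.SpecialLinearGroup.toGL : _ →* GL (Fin d) R)).Normal := by
  refine ⟨?_⟩
  rintro _ ⟨s, hs, rfl⟩ g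
  obtain ⟨g, u, rfl⟩ := exists_eq_toGL_mul_diagonalGL g 0
  obtain ⟨s', hs', hconj⟩ := diagonalGL_conj_mem_map_EHsub hE (Pi.mulSingle 0 u) hs
  refine ⟨g * s' * g⁻¹, (EHsub_normal hE).conj_mem _ hs' _, ?_⟩
  rw [map_mul, map_mul, map_inv, hconj]
  group

theorem IsBlock.commute_mk (hE : Esub R d = ⊤) [((EHsub R d H).map
    (Matrix.SpecialLinearGroup.toGL : _ →* GL (Fin d) R)).Normal] {l : Fin d}
    {c : SpecialLinearGroup (Fin d) R} (hb : IsBlock l c) (hc : c ∈ SLrel R d H)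
    (g : GL (Fin d) R) : Commute
      (QuotientGroup.mk' ((EHsub R d H).map Matrix.SpecialLinearGroup.toGL) (c : GL (Fin d) R))
      (QuotientGroup.mk' _ g) := by
  obtain ⟨s, u, rfl⟩ := exists_eq_toGL_mul_diagonalGL g l
  rw [map_mul]
  refine Commute.mul_right ?_ ((hb.commute_diagonalGL_mulSingle u).map _)
  refine hb.commute_map (φ := (QuotientGroup.mk' ((EHsub R d H).map _)).comp _) ?_ hE hc s
  rw [← MonoidHom.comap_ker, QuotientGroup.ker_mk']
  exact Subgroup.le_comap_map _ _

end GeneralLinear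

theorem SK1_central_in_GL_general (R : Type*) [CommRing R] (H : Ideal R)
    (hsr : HasStableRangeOne (R ⧸ H)) (d : ℕ) (hd : 3 ≤ d) (hE : Esub R d = ⊤) :
    ∀ a : SpecialLinearGroup (Fin d) R, a ∈ SLrel R d H →
      ∀ g : GL (Fin d) R,
        g * SpecialLinearGroup.toGL a * g⁻¹ * (SpecialLinearGroup.toGL a)⁻¹ ∈
          Subgroup.map (SpecialLinearGroup.toGL (n := Fin d) (R := R)) (EHsub R d H) := by
  have : NeZero d := ⟨by lia⟩
  have hnormal := map_toGL_EHsub_normal (H := H) hE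
  let π := QuotientGroup.mk'
    (Subgroup.map (SpecialLinearGroup.toGL (n := Fin d) (R := R)) (EHsub R d H))
  let Z := (Subgroup.center _).comap (π.comp SpecialLinearGroup.toGL)
  have mem_Z {a} : a ∈ Z ↔ ∀ g, Commute (π g) (π (SpecialLinearGroup.toGL a)) :=
    Subgroup.mem_center_iff.trans (QuotientGroup.mk'_surjective _).forall
  have SLrel_le : SLrel R d H ≤ Z := by
    refine SLrel_le_of_forall_isBlock_mem hd hE hsr (fun a ha ↦ ?_) fun l c hc hb ↦
      mem_Z.mpr fun g ↦ (hb.commute_mk hE hc g).symm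
    have : π (SpecialLinearGroup.toGL a) = 1 :=
      (QuotientGroup.eq_one_iff _).mpr (Subgroup.mem_map_of_mem _ ha)
    exact mem_Z.mpr fun g ↦ by rw [this]; exact Commute.one_right _
  intro a ha g
  rw [← commutatorElement_def, ← QuotientGroup.eq_one_iff]
  exact commutatorElement_eq_one_iff_commute.mpr (mem_Z.mp (SLrel_le ha) g)

/-- If `H` has finite index in `R`, `d ≥ 3`, and `E_d(R) = SL_d(R)`, then
`SK₁(R,H;d) = SL_d(R,H)/E_d(R,H)` is central in `GL_d(R)/E_d(R,H)`: every commutator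
of an element of `SL_d(R,H)` with an element of `GL_d(R)` lies in `E_d(R,H)`. -/
theorem SK1_central_in_GL (R : Type*) [CommRing R] (H : Ideal R) [Finite (R ⧸ H)]
    (d : ℕ) (hd : 3 ≤ d) (hE : Esub R d = ⊤) :
    ∀ a : SpecialLinearGroup (Fin d) R, a ∈ SLrel R d H →
      ∀ g : GL (Fin d) R,
        g * SpecialLinearGroup.toGL a * g⁻¹ * (SpecialLinearGroup.toGL a)⁻¹ ∈
          Subgroup.map (SpecialLinearGroup.toGL (n := Fin d) (R := R)) (EHsub R d H) :=
  SK1_central_in_GL_general R H (.of_finite_maximalSpectrum _) d hd hE
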